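/- Let T: Lip(X) → Lip(Y) be a linear biseparating map between spaces of bounded scalar-valued Lipschitz functions. Then T is continuous, and there exist a bi-Lipschitz homeomorphism h: Y → X and a function τ ∈ Lip(Y) with τ(y) ≠ 0 for all y ∈ Y, such that (Tf)(y) = τ(y) · f(h(y)) for every f ∈ Lip(X) and every y ∈ Y. -/

import Mathlib

/-!
Disjointness of `f` and `g` is equivalent to disjointness of `T f` and `T g`, so `T` transports
supports. It also transports positive distance: whether open sets are far apart is visible from
cut-offs of an arbitrary function between them, and by surjectivity one may cut off the function
`T⁻¹ 1` (`IsBisep.not_far`). Hence the sets corresponding to small balls around `y` have small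
diameter (`IsBisep.pullBall_small`), for otherwise they would contain pairs of points a fixed
distance apart, and from these one extracts two far sets meeting all of them. By completeness they
shrink to a point `h y`, which is in the closed support of `f` exactly when `y` is in that of `T f`
(`IsBisep.exists_suppAt`). The same argument for `T⁻¹` provides the inverse of `h`.

If `f` vanishes at `h y`, the function equal to `f` on alternate thin shells around `h y` and to `0`
on the others is Lipschitz, whence `T f y = 0` (`SuppAt.apply_eq_zero`) and
`T f y = T 1 y * f (h y)`. The weight `T 1` is bounded away from zero by surjectivity, so `f ∘ h` is
Lipschitz for every Lipschitz `f`, and Baire's theorem makes `h` Lipschitz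
(`exists_lipschitzWith_of_comp`). By symmetry `h⁻¹` is Lipschitz, and continuity of `T` is read off
from the formula.
-/

open Metric Set Function Bornology
open scoped NNReal

/-- `f` is a bounded Lipschitz function. -/
def IsLip {X E : Type*} [PseudoMetricSpace X] [NormedAddCommGroup E] (f : X → E) : Prop :=
  (∃ K : ℝ≥0, LipschitzWith K f) ∧ ∃ C : ℝ, ∀ x, ‖f x‖ ≤ C

/-- The cozero set of `f`. -/
def coz {X E : Type*} [Zero E] (f : X → E) : Set X := {x | f x ≠ 0}

/-- The norm `‖f‖_L = max {‖f‖_∞, L(f)}` on bounded Lipschitz functions. -/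
noncomputable def lipNorm {X E : Type*} [PseudoMetricSpace X] [NormedAddCommGroup E]
    (f : X → E) : ℝ :=
  max (⨆ x, ‖f x‖) (⨆ p : X × X, ‖f p.1 - f p.2‖ / dist p.1 p.2)

/-- `T` is a linear biseparating map from `Lip(X,E)` onto `Lip(Y,F)`:
it maps bounded Lipschitz functions to bounded Lipschitz functions, is linear,
restricts to a bijection between the spaces of bounded Lipschitz functions, and
both `T` and its inverse are separating (disjointness preserving). -/
structure IsBisep (𝕂 : Type*) {X Y E F : Type*} [RCLike 𝕂]
    [PseudoMetricSpace X] [PseudoMetricSpace Y]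
    [NormedAddCommGroup E] [NormedSpace 𝕂 E] [NormedAddCommGroup F] [NormedSpace 𝕂 F]
    (T : (X → E) → (Y → F)) : Prop where
  maps_lip : ∀ f, IsLip f → IsLip (T f)
  map_add : ∀ f g, IsLip f → IsLip g → T (f + g) = T f + T g
  map_smul : ∀ (c : 𝕂) (f : X → E), IsLip f → T (c • f) = c • T f
  inj : ∀ f g, IsLip f → IsLip g → T f = T g → f = g
  surj : ∀ g, IsLip g → ∃ f, IsLip f ∧ T f = g
  sep : ∀ f g, IsLip f → IsLip g → coz f ∩ coz g = ∅ → coz (T f) ∩ coz (T g) = ∅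
  sep_inv : ∀ f g, IsLip f → IsLip g → coz (T f) ∩ coz (T g) = ∅ → coz f ∩ coz g = ∅

/-! ### Bounded Lipschitz functions -/

section Basics

variable {𝕂 X Y : Type*} [RCLike 𝕂] [MetricSpace X] [MetricSpace Y]

lemma IsLip.of_lipschitz (hX : IsBounded (univ : Set X)) {f : X → 𝕂} {K : ℝ≥0}
    (hf : LipschitzWith K f) : IsLip f := by
  refine ⟨⟨K, hf⟩, ?_⟩
  obtain ⟨C, hC⟩ := (hf.isBounded_image hX).exists_norm_le
  exact ⟨C, fun x => hC _ ⟨x, mem_univ _, rfl⟩⟩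

lemma IsLip.continuous {f : X → 𝕂} (hf : IsLip f) : Continuous f := by
  obtain ⟨⟨K, hK⟩, -⟩ := hf
  exact hK.continuous

lemma IsLip.const (c : 𝕂) : IsLip (fun _ : X => c) :=
  ⟨⟨0, LipschitzWith.const c⟩, ‖c‖, fun _ => le_rfl⟩

lemma IsLip.add {f g : X → 𝕂} (hf : IsLip f) (hg : IsLip g) : IsLip (f + g) := by
  obtain ⟨⟨K, hK⟩, C, hC⟩ := hf
  obtain ⟨⟨L, hL⟩, D, hD⟩ := hg
  exact ⟨⟨K + L, hK.add hL⟩, C + D, fun x => (norm_add_le _ _).trans (add_le_add (hC x) (hD x))⟩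

lemma IsLip.smul {f : X → 𝕂} (c : 𝕂) (hf : IsLip f) : IsLip (c • f) := by
  obtain ⟨⟨K, hK⟩, C, hC⟩ := hf
  refine ⟨⟨‖c‖₊ * K, LipschitzWith.of_dist_le_mul fun x y => ?_⟩, ‖c‖ * C, fun x => ?_⟩
  · have := hK.dist_le_mul x y
    rw [dist_eq_norm] at this ⊢
    simp only [Pi.smul_apply, ← smul_sub, norm_smul, NNReal.coe_mul, coe_nnnorm, mul_assoc]
    gcongr
  · simp only [Pi.smul_apply, norm_smul]
    gcongr
    exact hC x

lemma IsLip.sub {f g : X → 𝕂} (hf : IsLip f) (hg : IsLip g) : IsLip (f - g) := by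
  have : f - g = f + (-1 : 𝕂) • g := by simp [sub_eq_add_neg]
  rw [this]
  exact hf.add (hg.smul _)

/-- Every open set is a cozero set: use the distance to the complement, or the constant `1` for the
whole space, where `infDist` to the empty set would be the junk value `0`. -/
lemma exists_isLip_coz_eq (𝕂 : Type*) [RCLike 𝕂] (hX : IsBounded (univ : Set X)) {O : Set X}
    (hO : IsOpen O) : ∃ j : X → 𝕂, IsLip j ∧ ∀ x, j x ≠ 0 ↔ x ∈ O := by
  rcases (Oᶜ).eq_empty_or_nonempty with h | h
  · refine ⟨fun _ => 1, IsLip.const 1, fun x => ?_⟩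
    have : O = univ := compl_empty_iff.mp h
    simp [this]
  · refine ⟨fun x => ((infDist x Oᶜ : ℝ) : 𝕂), IsLip.of_lipschitz (K := 1) hX ?_, fun x => ?_⟩
    · refine LipschitzWith.of_dist_le_mul fun x y => ?_
      have := (lipschitz_infDist_pt Oᶜ).dist_le_mul x y
      rwa [dist_eq_norm, ← RCLike.ofReal_sub, RCLike.norm_ofReal, ← Real.dist_eq]
    · have h1 := hO.isClosed_compl.mem_iff_infDist_zero h (x := x)
      rw [Ne, RCLike.ofReal_eq_zero, ← h1, mem_compl_iff, not_not]

/-- Cutting off a Lipschitz function: if `‖g u‖` is controlled by `dist u v` for `u ∈ E`, `v ∈ O`,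
then some Lipschitz function agrees with `g` on `E` and vanishes on `O`. This covers both sets at
positive distance and sets that touch only at a zero of `g`. -/
lemma exists_isLip_cutoff (hX : IsBounded (univ : Set X)) {g : X → 𝕂} (hg : IsLip g)
    {E O : Set X} {C : ℝ} (hC : 0 ≤ C) (h : ∀ u ∈ E, ∀ v ∈ O, ‖g u‖ ≤ C * dist u v) :
    ∃ f : X → 𝕂, IsLip f ∧ (∀ u ∈ E, f u = g u) ∧ ∀ v ∈ O, f v = 0 := by
  classical
  obtain ⟨⟨K, hK⟩, -⟩ := hg
  have hzero : ∀ u ∈ E, u ∈ O → g u = 0 := fun u hu hv => by simpa using h u hu u hv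
  have hL : LipschitzOnWith (K + C.toNNReal) (fun x => if x ∈ E then g x else 0) (E ∪ O) := by
    refine LipschitzOnWith.of_dist_le_mul fun u hu v hv => ?_
    have h1 := hK.dist_le_mul u v
    have h2 : 0 ≤ (K : ℝ) * dist u v := by positivity
    have h3 : 0 ≤ C * dist u v := by positivity
    simp only [NNReal.coe_add, Real.coe_toNNReal C hC, add_mul]
    by_cases hu' : u ∈ E <;> by_cases hv' : v ∈ E <;> simp only [hu', hv', if_true, if_false]
    · linarith
    · have := h u hu' v (hv.resolve_left hv')
      rw [dist_zero_right]
      linarith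
    · have := h v hv' u (hu.resolve_left hu')
      rw [dist_zero_left]
      rw [dist_comm] at this
      linarith
    · rw [dist_self]
      linarith
  obtain ⟨f, hf, hfe⟩ := hL.extend_finite_dimension
  refine ⟨f, IsLip.of_lipschitz hX hf, fun u hu => ?_, fun v hv => ?_⟩
  · rw [← hfe (Or.inl hu)]
    simp [hu]
  · rw [← hfe (Or.inr hv)]
    by_cases hv' : v ∈ E
    · simp [hv', hzero v hv' hv]
    · simp [hv']

end Basics

/-! ### Support points of a biseparating map -/

section Bisep

variable {𝕂 X Y : Type*} [RCLike 𝕂] [MetricSpace X] [MetricSpace Y]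
  {T : (X → 𝕂) → (Y → 𝕂)} {S : (Y → 𝕂) → (X → 𝕂)}

lemma IsBisep.map_sub (hT : IsBisep 𝕂 T) {f g : X → 𝕂} (hf : IsLip f) (hg : IsLip g) :
    T (f - g) = T f - T g := by
  have : f - g = f + (-1 : 𝕂) • g := by simp [sub_eq_add_neg]
  rw [this, hT.map_add _ _ hf (hg.smul _), hT.map_smul _ _ hg]
  simp [sub_eq_add_neg]

lemma coz_inter_eq_empty_iff {Z : Type*} {f g : Z → 𝕂} :
    coz f ∩ coz g = ∅ ↔ ∀ x, f x = 0 ∨ g x = 0 := by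
  simp only [coz, Set.eq_empty_iff_forall_notMem, mem_inter_iff, mem_ofPred_eq]
  exact forall_congr' fun x => by tauto

lemma IsBisep.perp_iff (hT : IsBisep 𝕂 T) {f g : X → 𝕂} (hf : IsLip f) (hg : IsLip g) :
    (∀ x, f x = 0 ∨ g x = 0) ↔ ∀ y, T f y = 0 ∨ T g y = 0 := by
  rw [← coz_inter_eq_empty_iff, ← coz_inter_eq_empty_iff]
  exact ⟨hT.sep f g hf hg, hT.sep_inv f g hf hg⟩

lemma IsBisep.exists_inverse (hT : IsBisep 𝕂 T) :
    ∃ S : (Y → 𝕂) → (X → 𝕂), IsBisep 𝕂 S ∧ (∀ f, IsLip f → S (T f) = f) ∧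
      ∀ g, IsLip g → T (S g) = g := by
  classical
  choose S hSl hS using hT.surj
  let S' : (Y → 𝕂) → (X → 𝕂) := fun g => if hg : IsLip g then S g hg else 0
  have hl : ∀ g, IsLip g → IsLip (S' g) := fun g hg => by simpa [S', hg] using hSl g hg
  have hr : ∀ g, IsLip g → T (S' g) = g := fun g hg => by simpa [S', hg] using hS g hg
  have hli : ∀ f, IsLip f → S' (T f) = f := fun f hf =>
    hT.inj _ _ (hl _ (hT.maps_lip f hf)) hf (hr _ (hT.maps_lip f hf))
  refine ⟨S', ⟨hl, fun f g hf hg => ?_, fun c f hf => ?_, fun f g hf hg h => ?_, fun g hg => ?_,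
    fun f g hf hg h => ?_, fun f g hf hg h => ?_⟩, hli, hr⟩
  · refine hT.inj _ _ (hl _ (hf.add hg)) ((hl _ hf).add (hl _ hg)) ?_
    rw [hr _ (hf.add hg), hT.map_add _ _ (hl _ hf) (hl _ hg), hr _ hf, hr _ hg]
  · refine hT.inj _ _ (hl _ (hf.smul c)) ((hl _ hf).smul c) ?_
    rw [hr _ (hf.smul c), hT.map_smul _ _ (hl _ hf), hr _ hf]
  · rw [← hr _ hf, ← hr _ hg, h]
  · exact ⟨T g, hT.maps_lip _ hg, hli _ hg⟩
  · apply hT.sep_inv _ _ (hl _ hf) (hl _ hg)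
    rwa [hr _ hf, hr _ hg]
  · have := hT.sep _ _ (hl _ hf) (hl _ hg) h
    rwa [hr _ hf, hr _ hg] at this

/-- `x` carries the evaluation of `T f` at `y`: the closed supports of `f` and `T f` contain
`x` and `y` simultaneously. -/
def SuppAt (T : (X → 𝕂) → (Y → 𝕂)) (x : X) (y : Y) : Prop :=
  ∀ f, IsLip f → (x ∈ closure (coz f) ↔ y ∈ closure (coz (T f)))

lemma SuppAt.symm (hS : IsBisep 𝕂 S) (hTS : ∀ g, IsLip g → T (S g) = g)
    {x : X} {y : Y} (h : SuppAt T x y) : SuppAt S y x := fun g hg => by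
  rw [h _ (hS.maps_lip g hg), hTS g hg]

lemma SuppAt.unique (hX : IsBounded (univ : Set X)) {x x' : X} {y : Y} (h : SuppAt T x y)
    (h' : SuppAt T x' y) : x = x' := by
  by_contra hne
  have hd : 0 < dist x' x := dist_pos.mpr (Ne.symm hne)
  obtain ⟨j, hj, hjO⟩ := exists_isLip_coz_eq 𝕂 hX (isOpen_ball (x := x) (ε := dist x' x / 2))
  have hc : coz j = ball x (dist x' x / 2) := Set.ext hjO
  have h1 : x ∈ closure (coz j) := by
    rw [hc]
    exact subset_closure (mem_ball_self (by linarith))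
  have h2 := (h' j hj).mpr ((h j hj).mp h1)
  rw [hc] at h2
  have := mem_closedBall.mp (closure_ball_subset_closedBall h2)
  linarith

/-- The open subset of `X` that corresponds to the ball of radius `r` around `y`: the union of the
cozero sets of those `k` for which `T k` lives in that ball. -/
def pullBall (T : (X → 𝕂) → (Y → 𝕂)) (y : Y) (r : ℝ) : Set X :=
  {x | ∃ k, IsLip k ∧ k x ≠ 0 ∧ ∀ z, T k z ≠ 0 → dist z y < r}

lemma pullBall_mono (y : Y) {r s : ℝ} (h : r ≤ s) : pullBall T y r ⊆ pullBall T y s := by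
  rintro x ⟨k, hk, hx, hz⟩
  exact ⟨k, hk, hx, fun z h' => (hz z h').trans_le h⟩

lemma IsBisep.map_zero (hT : IsBisep 𝕂 T) : T 0 = 0 := by
  have h0 : IsLip (0 : X → 𝕂) := IsLip.const 0
  simpa using hT.map_smul 0 0 h0

lemma IsBisep.exists_ne_zero (hT : IsBisep 𝕂 T) {j : X → 𝕂} (hj : IsLip j) {x : X}
    (hx : j x ≠ 0) : ∃ y, T j y ≠ 0 := by
  by_contra! h
  have h0 : IsLip (0 : X → 𝕂) := IsLip.const 0
  have : j = 0 := hT.inj _ _ hj h0 (by rw [hT.map_zero]; exact funext h)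
  exact hx (by simp [this])

lemma IsBisep.exists_ne_zero' (hT : IsBisep 𝕂 T) {j : X → 𝕂} {y : Y}
    (hy : T j y ≠ 0) : ∃ x, j x ≠ 0 := by
  by_contra! h
  have : j = 0 := funext h
  rw [this, hT.map_zero] at hy
  exact hy rfl

lemma pullBall_nonempty (hT : IsBisep 𝕂 T) (hY : IsBounded (univ : Set Y)) (y : Y) {r : ℝ}
    (hr : 0 < r) : (pullBall T y r).Nonempty := by
  obtain ⟨q, hq, hqO⟩ := exists_isLip_coz_eq 𝕂 hY (isOpen_ball (x := y) (ε := r))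
  obtain ⟨p, hp, rfl⟩ := hT.surj q hq
  obtain ⟨x, hx⟩ := hT.exists_ne_zero' ((hqO y).mpr (mem_ball_self hr))
  exact ⟨x, p, hp, hx, fun z hz => (hqO z).mp hz⟩

/-- `T` respects inclusion of supports, because this is expressible by disjointness. -/
lemma IsBisep.coz_subset_closure (hT : IsBisep 𝕂 T) (hY : IsBounded (univ : Set Y))
    {j k : X → 𝕂} (hj : IsLip j) (hk : IsLip k) (h : ∀ x, j x ≠ 0 → k x ≠ 0) :
    ∀ y, T j y ≠ 0 → y ∈ closure (coz (T k)) := by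
  intro y hy
  by_contra hyk
  obtain ⟨q, hq, hqO⟩ := exists_isLip_coz_eq 𝕂 hY
    (isClosed_closure (s := coz (T k))).isOpen_compl
  obtain ⟨p, hp, rfl⟩ := hT.surj q hq
  have h1 : ∀ x, p x = 0 ∨ k x = 0 := (hT.perp_iff hp hk).mpr fun z => by
    by_contra! hz
    exact (hqO z).mp hz.1 (subset_closure hz.2)
  have h2 : ∀ x, p x = 0 ∨ j x = 0 := fun x => by
    by_contra! hz
    exact (h1 x).elim hz.1 (h x hz.2)
  exact ((hT.perp_iff hp hj).mp h2 y).elim ((hqO y).mpr hyk) hy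

/-- Locality: changing `f` off an open set that meets every `pullBall T y r` leaves `T f y`
unchanged. -/
lemma IsBisep.eq_of_eqOn (hT : IsBisep 𝕂 T) (hX : IsBounded (univ : Set X))
    (hY : IsBounded (univ : Set Y)) {y : Y} {A : Set X} (hA : IsOpen A)
    (hm : ∀ r > 0, (A ∩ pullBall T y r).Nonempty) {f g : X → 𝕂} (hf : IsLip f) (hg : IsLip g)
    (hfg : ∀ x ∈ A, f x = g x) : T f y = T g y := by
  have hcl : IsClosed {z | T f z = T g z} :=
    isClosed_eq (hT.maps_lip f hf).continuous (hT.maps_lip g hg).continuous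
  change y ∈ {z | T f z = T g z}
  rw [← hcl.closure_eq, Metric.mem_closure_iff]
  intro ε hε
  obtain ⟨a, haA, k, hk, hka, hkb⟩ := hm (ε / 2) (by linarith)
  have hko : IsOpen {x | k x ≠ 0} := isOpen_ne_fun hk.continuous continuous_const
  obtain ⟨j, hj, hjO⟩ := exists_isLip_coz_eq 𝕂 hX (hA.inter hko)
  obtain ⟨z, hz⟩ := hT.exists_ne_zero hj ((hjO a).mpr ⟨haA, hka⟩)
  refine ⟨z, ?_, ?_⟩
  · have := (hT.perp_iff (hf.sub hg) hj).mp (fun x => by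
      by_cases hx : x ∈ A
      · left
        simp [hfg x hx]
      · right
        by_contra h
        exact hx ((hjO x).mp h).1) z
    rw [hT.map_sub hf hg] at this
    exact sub_eq_zero.mp (this.resolve_right hz)
  · have h1 := hT.coz_subset_closure hY hj hk (fun x hx => ((hjO x).mp hx).2) z hz
    have h2 : closure (coz (T k)) ⊆ closedBall y (ε / 2) :=
      closure_minimal (fun w hw => (hkb w hw).le) isClosed_closedBall
    have := mem_closedBall.mp (h2 h1)
    rw [dist_comm]
    linarith

/-- Two open sets at positive distance cannot both meet every `pullBall T y r`: the cut-off of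
`T⁻¹ 1` between them would have image equal to both `1` and `0` at `y`. -/
lemma IsBisep.not_far (hT : IsBisep 𝕂 T) (hX : IsBounded (univ : Set X))
    (hY : IsBounded (univ : Set Y)) {y : Y} {A B : Set X} (hA : IsOpen A) (hB : IsOpen B)
    (hmA : ∀ r > 0, (A ∩ pullBall T y r).Nonempty) (hmB : ∀ r > 0, (B ∩ pullBall T y r).Nonempty)
    {ε : ℝ} (hε : 0 < ε) (hAB : ∀ a ∈ A, ∀ b ∈ B, ε ≤ dist a b) : False := by
  obtain ⟨g, hg, hg1⟩ := hT.surj (fun _ => 1) (IsLip.const 1)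
  obtain ⟨M, hM⟩ := hg.2
  obtain ⟨f, hf, hfA, hfB⟩ := exists_isLip_cutoff hX hg (E := A) (O := B) (C := |M| / ε)
    (by positivity) (fun u hu v hv => by
      rw [div_mul_eq_mul_div, le_div_iff₀ hε]
      have h1 := hAB u hu v hv
      have h2 := (hM u).trans (le_abs_self M)
      gcongr)
  have h1 := hT.eq_of_eqOn hX hY hA hmA hf hg hfA
  have h0 : IsLip (0 : X → 𝕂) := IsLip.const 0
  have h2 := hT.eq_of_eqOn hX hY hB hmB hf h0 hfB
  rw [hT.map_zero] at h2
  rw [h2, hg1] at h1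
  simp at h1

/-- If `a n`, `b n` lie in shrinking pulled-back balls but stay `ε` apart, then `a n` does not
cluster near any `p`: a small ball around `p` and the complement of a larger one would be far
sets meeting all pulled-back balls. -/
lemma IsBisep.pullBall_no_cluster (hT : IsBisep 𝕂 T) (hX : IsBounded (univ : Set X))
    (hY : IsBounded (univ : Set Y)) {y : Y} {ε : ℝ} (hε : 0 < ε) {a b : ℕ → X}
    (ha : ∀ n : ℕ, a n ∈ pullBall T y (1 / (n + 1))) (hb : ∀ n : ℕ, b n ∈ pullBall T y (1 / (n + 1)))
    (hab : ∀ n, ε ≤ dist (a n) (b n)) (p : X) :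
    ∀ᶠ n in Filter.atTop, ε / 4 ≤ dist (a n) p := by
  by_contra hne
  rw [Filter.not_eventually] at hne
  have hfr : ∀ r > (0 : ℝ), ∃ n : ℕ, dist (a n) p < ε / 4 ∧ (1 : ℝ) / (n + 1) ≤ r := by
    intro r hr
    obtain ⟨N, hN⟩ := exists_nat_one_div_lt hr
    obtain ⟨n, hn, hn'⟩ := (Filter.frequently_atTop.mp hne) N
    refine ⟨n, not_le.mp hn', le_trans ?_ hN.le⟩
    exact Nat.one_div_le_one_div hn
  refine hT.not_far hX hY (y := y) (A := ball p (ε / 4)) (B := (closedBall p (ε / 2))ᶜ) isOpen_ball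
    isClosed_closedBall.isOpen_compl ?_ ?_ (ε := ε / 4) (by linarith) ?_
  · intro r hr
    obtain ⟨n, hn, hnr⟩ := hfr r hr
    exact ⟨a n, hn, pullBall_mono y hnr (ha n)⟩
  · intro r hr
    obtain ⟨n, hn, hnr⟩ := hfr r hr
    refine ⟨b n, ?_, pullBall_mono y hnr (hb n)⟩
    rw [mem_compl_iff, mem_closedBall, not_le]
    have := dist_triangle_right (a n) (b n) p
    have := hab n
    linarith
  · intro u hu v hv
    rw [mem_compl_iff, mem_closedBall, not_le] at hv
    have := dist_triangle_left v p u
    rw [mem_ball] at hu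
    linarith

/-- Small balls in `Y` pull back to sets of small diameter. Otherwise there are points `a n`, `b n`
of the `n`-th set at distance at least `ε`; neither sequence clusters, so a subsequence makes
`{a n}` and `{b n}` uniformly separated. -/
lemma IsBisep.pullBall_small (hT : IsBisep 𝕂 T) (hX : IsBounded (univ : Set X))
    (hY : IsBounded (univ : Set Y)) (y : Y) {ε : ℝ} (hε : 0 < ε) :
    ∃ r > 0, ∀ a ∈ pullBall T y r, ∀ b ∈ pullBall T y r, dist a b < ε := by
  by_contra! hcon
  choose a ha b hb hab using fun n : ℕ => hcon (1 / (n + 1)) Nat.one_div_pos_of_nat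
  have h1 := hT.pullBall_no_cluster hX hY hε ha hb hab
  have h2 := hT.pullBall_no_cluster hX hY hε hb ha (fun n => by rw [dist_comm]; exact hab n)
  obtain ⟨φ, -, hφ⟩ := exists_seq_of_forall_finset_exists (α := ℕ) (fun _ => True)
    (fun m n => m < n ∧ ε / 4 ≤ dist (a n) (b m) ∧ ε / 4 ≤ dist (b n) (a m)) (by
      intro s _
      have : ∀ᶠ n in Filter.atTop, ∀ m ∈ s,
          m < n ∧ ε / 4 ≤ dist (a n) (b m) ∧ ε / 4 ≤ dist (b n) (a m) := by
        rw [Filter.eventually_all_finset]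
        intro m _
        exact (Filter.eventually_gt_atTop m).and ((h1 (b m)).and (h2 (a m)))
      obtain ⟨n, hn⟩ := this.exists
      exact ⟨n, trivial, hn⟩)
  have hmono : StrictMono φ := fun m n h => (hφ m n h).1
  have hfar : ∀ m n, ε / 4 ≤ dist (a (φ m)) (b (φ n)) := by
    intro m n
    rcases lt_trichotomy m n with h | h | h
    · rw [dist_comm]
      exact (hφ m n h).2.2
    · subst h
      have := hab (φ m)
      linarith
    · exact (hφ n m h).2.1
  have hsm : ∀ r > (0 : ℝ), ∃ n : ℕ, (1 : ℝ) / ((φ n : ℕ) + 1) ≤ r := by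
    intro r hr
    obtain ⟨N, hN⟩ := exists_nat_one_div_lt hr
    exact ⟨N, (Nat.one_div_le_one_div (hmono.id_le N)).trans hN.le⟩
  refine hT.not_far hX hY (y := y) (A := ⋃ n, ball (a (φ n)) (ε / 16))
    (B := ⋃ n, ball (b (φ n)) (ε / 16))
    (isOpen_iUnion fun _ => isOpen_ball) (isOpen_iUnion fun _ => isOpen_ball) ?_ ?_
    (ε := ε / 8) (by linarith) ?_
  · intro r hr
    obtain ⟨n, hn⟩ := hsm r hr
    exact ⟨a (φ n), mem_iUnion.mpr ⟨n, mem_ball_self (by linarith)⟩, pullBall_mono y hn (ha _)⟩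
  · intro r hr
    obtain ⟨n, hn⟩ := hsm r hr
    exact ⟨b (φ n), mem_iUnion.mpr ⟨n, mem_ball_self (by linarith)⟩, pullBall_mono y hn (hb _)⟩
  · intro u hu v hv
    obtain ⟨m, hm⟩ := mem_iUnion.mp hu
    obtain ⟨n, hn⟩ := mem_iUnion.mp hv
    rw [mem_ball] at hm hn
    have := hfar m n
    have := dist_triangle4 (a (φ m)) u v (b (φ n))
    rw [dist_comm] at hm
    linarith

/-- The sets `pullBall T y r` shrink to a point `x` by completeness. That `x` lies in the closed
support of `f` only if `y` lies in that of `T f` again uses a cut-off: otherwise one gets a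
function equal to `1` on some `pullBall T y r` and to `0` on the cozero set of `f`. -/
lemma IsBisep.exists_suppAt [CompleteSpace X] (hT : IsBisep 𝕂 T) (hX : IsBounded (univ : Set X))
    (hY : IsBounded (univ : Set Y)) (y : Y) : ∃ x, SuppAt T x y := by
  choose a ha using fun n : ℕ => pullBall_nonempty hT hY y (r := 1 / (n + 1)) Nat.one_div_pos_of_nat
  have hev : ∀ r > (0 : ℝ), ∃ N, ∀ n ≥ N, a n ∈ pullBall T y r := by
    intro r hr
    obtain ⟨N, hN⟩ := exists_nat_one_div_lt hr
    exact ⟨N, fun n hn => pullBall_mono y ((Nat.one_div_le_one_div hn).trans hN.le) (ha n)⟩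
  have hc : CauchySeq a := by
    rw [Metric.cauchySeq_iff]
    intro ε hε
    obtain ⟨r, hr, h⟩ := hT.pullBall_small hX hY y hε
    obtain ⟨N, hN⟩ := hev r hr
    exact ⟨N, fun m hm n hn => h _ (hN m hm) _ (hN n hn)⟩
  obtain ⟨x, hx⟩ := cauchySeq_tendsto_of_complete hc
  have hxcl : ∀ r > 0, x ∈ closure (pullBall T y r) := by
    intro r hr
    obtain ⟨N, hN⟩ := hev r hr
    exact mem_closure_of_tendsto hx (Filter.eventually_atTop.mpr ⟨N, hN⟩)
  have hsm : ∀ ε > 0, ∃ r > 0, ∀ u ∈ pullBall T y r, dist x u < ε := by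
    intro ε hε
    obtain ⟨r, hr, h⟩ := hT.pullBall_small hX hY y (half_pos hε)
    refine ⟨r, hr, fun u hu => ?_⟩
    have h1 : pullBall T y r ⊆ closedBall u (ε / 2) := fun v hv => (h v hv u hu).le
    have := mem_closedBall.mp (closure_minimal h1 isClosed_closedBall (hxcl r hr))
    linarith
  refine ⟨x, fun f hf => ⟨fun hxf => ?_, fun hyf => ?_⟩⟩
  · by_contra hyf
    rw [Metric.mem_closure_iff] at hyf
    push Not at hyf
    obtain ⟨r, hr, hyf⟩ := hyf
    have h1l : IsLip (fun _ : X => (1 : 𝕂)) := IsLip.const 1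
    obtain ⟨M, hM⟩ := (hT.maps_lip _ h1l).2
    -- The cut-off of `T 1` between a ball around `y` and the support of `T f`.
    obtain ⟨w, hw, hwb, hwf⟩ := exists_isLip_cutoff hY (hT.maps_lip _ h1l) (E := ball y (r / 2))
      (O := coz (T f)) (C := |M| / (r / 2)) (by positivity) (fun u hu v hv => by
        rw [div_mul_eq_mul_div, le_div_iff₀ (by linarith)]
        have h1 : r / 2 ≤ dist u v := by
          have := hyf v hv
          have := dist_triangle_left y v u
          rw [mem_ball] at hu
          linarith
        have h2 := (hM u).trans (le_abs_self M)
        gcongr)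
    obtain ⟨v, hv, rfl⟩ := hT.surj w hw
    have hv1 : pullBall T y (r / 2) ⊆ {x | v x = 1} := by
      rintro u ⟨k, hk, hku, hkb⟩
      have := (hT.perp_iff (hv.sub h1l) hk).mpr (fun z => by
        by_cases hz : z ∈ ball y (r / 2)
        · left
          rw [hT.map_sub hv h1l]
          simp [hwb z hz]
        · right
          by_contra h
          exact hz (hkb z h)) u
      exact sub_eq_zero.mp (this.resolve_right hku)
    have hv0 : coz f ⊆ {x | v x = 0} := by
      intro u hu
      refine ((hT.perp_iff hv hf).mpr (fun z => ?_) u).resolve_right hu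
      by_cases hz : T f z = 0
      · exact Or.inr hz
      · exact Or.inl (hwf z hz)
    have e1 : v x = 1 := closure_minimal hv1 (isClosed_eq hv.continuous continuous_const)
      (hxcl _ (half_pos hr))
    have e0 : v x = 0 := closure_minimal hv0 (isClosed_eq hv.continuous continuous_const) hxf
    rw [e1] at e0
    exact one_ne_zero e0
  · rw [Metric.mem_closure_iff]
    intro ε hε
    obtain ⟨r, hr, hrε⟩ := hsm ε hε
    obtain ⟨z, hz, hzr⟩ := Metric.mem_closure_iff.mp hyf r hr
    have hfo : IsOpen {z | T f z ≠ 0} :=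
      isOpen_ne_fun (hT.maps_lip f hf).continuous continuous_const
    obtain ⟨q, hq, hqO⟩ := exists_isLip_coz_eq 𝕂 hY (hfo.inter (isOpen_ball (x := y) (ε := r)))
    obtain ⟨p, hp, rfl⟩ := hT.surj q hq
    have hqz : T p z ≠ 0 := (hqO z).mpr ⟨hz, by rwa [mem_ball']⟩
    by_contra! hcon
    refine ((hT.perp_iff hp hf).mp (fun u => ?_) z).elim hqz hz
    by_contra! hu
    have h1 := hcon u hu.2
    have h2 := hrε u ⟨p, hp, hu.1, fun w hw => ((hqO w).mp hw).2⟩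
    linarith


/-! ### Weighted composition form and Lipschitz continuity -/

lemma SuppAt.eq_of_eqOn (hT : IsBisep 𝕂 T) (hX : IsBounded (univ : Set X)) {x : X} {y : Y}
    (h : SuppAt T x y) {A : Set X} (hA : IsOpen A) (hx : x ∈ closure A) {f g : X → 𝕂}
    (hf : IsLip f) (hg : IsLip g) (hfg : ∀ x ∈ A, f x = g x) : T f y = T g y := by
  obtain ⟨k, hk, hkA⟩ := exists_isLip_coz_eq 𝕂 hX hA
  have hc : coz k = A := Set.ext hkA
  have hy : y ∈ closure (coz (T k)) := (h k hk).mp (by rwa [hc])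
  have hsub : coz (T k) ⊆ {z | T f z = T g z} := by
    intro z hz
    have := (hT.perp_iff (hf.sub hg) hk).mp (fun x => by
      by_cases hx : x ∈ A
      · left
        simp [hfg x hx]
      · right
        by_contra h
        exact hx ((hkA x).mp h)) z
    rw [hT.map_sub hf hg] at this
    exact sub_eq_zero.mp (this.resolve_right hz)
  exact closure_minimal hsub
    (isClosed_eq (hT.maps_lip f hf).continuous (hT.maps_lip g hg).continuous) hy

/-- At an accumulation point `x`, there are open sets `E`, `O` (unions of alternating thin shells
around `x`) that both accumulate at `x`, yet are separated proportionally to the distance to `x`. -/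
lemma exists_shells {x : X} (hx : x ∈ closure ({x}ᶜ : Set X)) :
    ∃ E O : Set X, IsOpen E ∧ IsOpen O ∧ x ∈ closure E ∧ x ∈ closure O ∧
      ∀ u ∈ E, ∀ v ∈ O, dist u x ≤ 2 * dist u v := by
  obtain ⟨w, hwne, hw⟩ := mem_closure_iff_seq_limit.mp hx
  have hwpos : ∀ n, 0 < dist (w n) x := fun n => dist_pos.mpr (hwne n)
  have hw0 : Filter.Tendsto (fun n => dist (w n) x) Filter.atTop (nhds 0) :=
    tendsto_iff_dist_tendsto_zero.mp hw
  obtain ⟨φ, -, hφ⟩ := exists_seq_of_forall_finset_exists (α := ℕ) (fun _ => True)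
    (fun m n => m < n ∧ dist (w n) x < dist (w m) x / 16) (by
      intro s _
      have : ∀ᶠ n in Filter.atTop, ∀ m ∈ s, m < n ∧ dist (w n) x < dist (w m) x / 16 := by
        rw [Filter.eventually_all_finset]
        intro m _
        have := hwpos m
        exact (Filter.eventually_gt_atTop m).and (hw0.eventually_lt_const (by linarith))
      obtain ⟨n, hn⟩ := this.exists
      exact ⟨n, trivial, hn⟩)
  have hmono : StrictMono φ := fun m n h => (hφ m n h).1
  let B : ℕ → Set X := fun k => {z | dist (w (φ k)) x / 2 < dist z x ∧ dist z x < 2 * dist (w (φ k)) x}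
  have hBo : ∀ k, IsOpen (B k) := fun k =>
    (isOpen_lt (g := fun z => dist z x) continuous_const (by fun_prop)).inter
      (isOpen_lt (f := fun z => dist z x) (by fun_prop) continuous_const)
  have hBm : ∀ k, w (φ k) ∈ B k := fun k => by
    have := hwpos (φ k)
    constructor <;> linarith
  have hBs : ∀ i j, i ≠ j → ∀ u ∈ B i, ∀ v ∈ B j, dist u x ≤ 2 * dist u v := by
    rintro i j hij u ⟨hu1, hu2⟩ v ⟨hv1, hv2⟩
    have t1 := dist_triangle u v x
    have t2 := dist_triangle_left v x u
    rcases lt_or_gt_of_ne hij with h | h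
    · have := (hφ i j h).2
      linarith
    · have := (hφ j i h).2
      linarith
  have hcl : ∀ ψ : ℕ → ℕ, StrictMono ψ → x ∈ closure (⋃ k, B (ψ k)) := fun ψ hψ =>
    mem_closure_of_tendsto (hw.comp (hmono.comp hψ).tendsto_atTop)
      (Filter.Eventually.of_forall fun k => mem_iUnion.mpr ⟨k, hBm (ψ k)⟩)
  refine ⟨⋃ k, B (2 * k), ⋃ k, B (2 * k + 1), isOpen_iUnion fun _ => hBo _,
    isOpen_iUnion fun _ => hBo _, hcl _ (fun a b h => by omega),
    hcl _ (fun a b h => by omega), fun u hu v hv => ?_⟩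
  obtain ⟨i, hi⟩ := mem_iUnion.mp hu
  obtain ⟨j, hj⟩ := mem_iUnion.mp hv
  exact hBs _ _ (by omega) u hi v hj

/-- `T f y` depends only on `f x`. For an accumulation point `x`, a Lipschitz function equal to
`f` on one family of shells and to `0` on the other has image equal to both `T f y` and `0`
at `y`; the vanishing of `f` at `x` is what makes such a function Lipschitz. -/
lemma SuppAt.apply_eq_zero (hT : IsBisep 𝕂 T) (hX : IsBounded (univ : Set X)) {x : X} {y : Y}
    (h : SuppAt T x y) {f : X → 𝕂} (hf : IsLip f) (hfx : f x = 0) : T f y = 0 := by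
  by_cases hx : x ∈ closure ({x}ᶜ : Set X)
  · obtain ⟨E, O, hE, hO, hxE, hxO, hEO⟩ := exists_shells hx
    obtain ⟨K, hK⟩ := hf.1
    obtain ⟨g, hg, hgE, hgO⟩ := exists_isLip_cutoff hX hf (E := E) (O := O) (C := K * 2)
      (by positivity) (fun u hu v hv => by
        have h1 := hK.dist_le_mul u x
        rw [hfx, dist_zero_right] at h1
        refine h1.trans ?_
        rw [mul_assoc]
        gcongr
        exact hEO u hu v hv)
    have h0 : IsLip (0 : X → 𝕂) := IsLip.const 0
    have e1 := h.eq_of_eqOn hT hX hE hxE hg hf hgE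
    have e2 := h.eq_of_eqOn hT hX hO hxO hg h0 hgO
    rw [← e1, e2, hT.map_zero]
    rfl
  · have hsub : coz f ⊆ ({x}ᶜ : Set X) := fun z hz hzx => hz (by rw [mem_singleton_iff.mp hzx, hfx])
    have h1 : x ∉ closure (coz f) := fun h' => hx (closure_mono hsub h')
    rw [h f hf] at h1
    by_contra h2
    exact h1 (subset_closure h2)

lemma SuppAt.apply_eq (hT : IsBisep 𝕂 T) (hX : IsBounded (univ : Set X)) {x : X} {y : Y}
    (h : SuppAt T x y) {f : X → 𝕂} (hf : IsLip f) : T f y = T (fun _ => 1) y * f x := by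
  have h1 : IsLip (fun _ : X => (1 : 𝕂)) := IsLip.const 1
  have h2 := h.apply_eq_zero hT hX (hf.sub (h1.smul (f x))) (by simp)
  rw [hT.map_sub hf (h1.smul _), hT.map_smul _ _ h1] at h2
  simp only [Pi.sub_apply, Pi.smul_apply, smul_eq_mul] at h2
  rw [sub_eq_zero.mp h2, mul_comm]

/-- A map pulling every `1`-Lipschitz function back to a Lipschitz function is Lipschitz. By
Baire's theorem, the `1`-Lipschitz functions whose pullback is `n`-Lipschitz contain a ball for
some `n`; a convex combination moves `dist · a` into that ball. -/
lemma exists_lipschitzWith_of_comp (hX : IsBounded (univ : Set X)) {h : Y → X}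
    (hh : ∀ f : X → ℝ, LipschitzWith 1 f → ∃ K : ℝ≥0, LipschitzWith K (f ∘ h)) :
    ∃ K : ℝ≥0, LipschitzWith K h := by
  let F : Set (BoundedContinuousFunction X ℝ) := {f | LipschitzWith 1 f}
  have hev : ∀ x : X, Continuous fun f : BoundedContinuousFunction X ℝ => f x := fun x =>
    continuous_eval_const x
  have hF : IsClosed F := by
    have : F = ⋂ x, ⋂ y, {f : BoundedContinuousFunction X ℝ | dist (f x) (f y) ≤ dist x y} := by
      ext f
      simp [F, lipschitzWith_iff_dist_le_mul]
    rw [this]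
    exact isClosed_iInter fun x => isClosed_iInter fun y =>
      isClosed_le ((hev x).dist (hev y)) continuous_const
  have : CompleteSpace F := hF.completeSpace_coe
  have : Nonempty F := ⟨⟨0, (LipschitzWith.const (0 : ℝ)).weaken zero_le_one⟩⟩
  let C : ℕ → Set F := fun n => {f | LipschitzWith (n : ℝ≥0) (f.1 ∘ h)}
  have hC : ∀ n, IsClosed (C n) := by
    intro n
    have : C n = ⋂ x, ⋂ y, {f : F | dist (f.1 (h x)) (f.1 (h y)) ≤ n * dist x y} := by
      ext f
      simp [C, lipschitzWith_iff_dist_le_mul]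
    rw [this]
    exact isClosed_iInter fun x => isClosed_iInter fun y =>
      isClosed_le (((hev _).comp continuous_subtype_val).dist
        ((hev _).comp continuous_subtype_val)) continuous_const
  have hU : ⋃ n, C n = univ := by
    refine eq_univ_of_forall fun f => ?_
    obtain ⟨K, hK⟩ := hh f.1 f.2
    obtain ⟨n, hn⟩ := exists_nat_ge K
    exact mem_iUnion.mpr ⟨n, hK.weaken hn⟩
  obtain ⟨n, f₀, hf₀⟩ := nonempty_interior_of_iUnion_of_closed hC hU
  obtain ⟨ε, hε, hball⟩ := Metric.mem_nhds_iff.mp (mem_interior_iff_mem_nhds.mp hf₀)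
  obtain ⟨D, hD⟩ := Metric.isBounded_iff.mp hX
  set M : ℝ := ‖f₀.1‖ + |D| + 1 with hM
  have hMpos : 0 < M := by positivity
  obtain ⟨t, ht0, ht1, htM⟩ : ∃ t : ℝ, 0 < t ∧ t ≤ 1 ∧ t * M < ε := by
    refine ⟨min 1 (ε / (2 * M)), by positivity, min_le_left _ _, ?_⟩
    calc min 1 (ε / (2 * M)) * M ≤ ε / (2 * M) * M := by gcongr; exact min_le_right _ _
      _ = ε / 2 := by field_simp
      _ < ε := by linarith
  have hmain : ∀ y z, t * dist (h y) (h z) ≤ 2 * n * dist y z := by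
    intro y z
    have hgL : LipschitzWith 1 (fun x => dist x (h z)) := LipschitzWith.dist_left (h z)
    let g : BoundedContinuousFunction X ℝ := BoundedContinuousFunction.ofNormedAddCommGroup
      (fun x => dist x (h z)) hgL.continuous |D| (fun x => by
        rw [Real.norm_of_nonneg dist_nonneg]
        exact (hD (mem_univ _) (mem_univ _)).trans (le_abs_self D))
    have hgn : ‖g‖ ≤ |D| :=
      BoundedContinuousFunction.norm_ofNormedAddCommGroup_le _ (abs_nonneg D) _
    let f₁ : BoundedContinuousFunction X ℝ := f₀.1 + t • (g - f₀.1)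
    have hf₁ : f₁ ∈ F := by
      refine LipschitzWith.of_dist_le_mul fun a b => ?_
      have h1 := f₀.2.dist_le_mul a b
      have h2 := hgL.dist_le_mul a b
      simp only [NNReal.coe_one, one_mul, Real.dist_eq] at h1 h2 ⊢
      have e : f₁ a - f₁ b = (1 - t) * (f₀.1 a - f₀.1 b) + t * (dist a (h z) - dist b (h z)) := by
        simp only [f₁, g, BoundedContinuousFunction.coe_add, BoundedContinuousFunction.coe_smul,
          BoundedContinuousFunction.coe_sub, Pi.add_apply, Pi.sub_apply, smul_eq_mul,
          BoundedContinuousFunction.coe_ofNormedAddCommGroup]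
        ring
      rw [e]
      refine (abs_add_le _ _).trans ?_
      rw [abs_mul, abs_mul, abs_of_nonneg (sub_nonneg.mpr ht1), abs_of_pos ht0]
      nlinarith [sub_nonneg.mpr ht1]
    have hmem : (⟨f₁, hf₁⟩ : F) ∈ C n := by
      apply hball
      rw [mem_ball, Subtype.dist_eq, dist_eq_norm]
      have e : f₁ - f₀.1 = t • (g - f₀.1) := by simp [f₁]
      change ‖f₁ - f₀.1‖ < ε
      rw [e, norm_smul, Real.norm_of_nonneg ht0.le]
      refine lt_of_le_of_lt ?_ htM
      have := norm_sub_le g f₀.1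
      gcongr
      linarith
    have h0 : f₀ ∈ C n := interior_subset hf₀
    have h1 := LipschitzWith.dist_le_mul hmem y z
    have h2 := LipschitzWith.dist_le_mul h0 y z
    simp only [Function.comp_apply, Real.dist_eq, NNReal.coe_natCast] at h1 h2
    have e : t * dist (h y) (h z) = (f₁ (h y) - f₁ (h z)) - (1 - t) * (f₀.1 (h y) - f₀.1 (h z)) := by
      simp only [f₁, g, BoundedContinuousFunction.coe_add, BoundedContinuousFunction.coe_smul,
        BoundedContinuousFunction.coe_sub, Pi.add_apply, Pi.sub_apply, smul_eq_mul,
        BoundedContinuousFunction.coe_ofNormedAddCommGroup, dist_self]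
      ring
    have h3 := abs_le.mp h1
    have h4 : |(1 - t) * (f₀.1 (h y) - f₀.1 (h z))| ≤ n * dist y z := by
      rw [abs_mul, abs_of_nonneg (sub_nonneg.mpr ht1)]
      have : (0 : ℝ) ≤ n * dist y z := by positivity
      nlinarith [abs_nonneg (f₀.1 (h y) - f₀.1 (h z))]
    have h5 := abs_le.mp h4
    rw [e]
    linarith
  refine ⟨(2 * n / t).toNNReal, LipschitzWith.of_dist_le_mul fun y z => ?_⟩
  rw [Real.coe_toNNReal _ (by positivity), div_mul_eq_mul_div, le_div_iff₀ ht0, mul_comm]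
  exact hmain y z

lemma IsBisep.lipschitz_of_suppAt (hT : IsBisep 𝕂 T) (hX : IsBounded (univ : Set X)) {h : Y → X}
    (hh : ∀ y, SuppAt T (h y) y) : ∃ K : ℝ≥0, LipschitzWith K h := by
  have h1l : IsLip (fun _ : X => (1 : 𝕂)) := IsLip.const 1
  obtain ⟨⟨L, hL⟩, -⟩ := hT.maps_lip _ h1l
  -- `T u = 1` gives `1 / T 1 = u ∘ h`, so `1 / T 1` is bounded.
  obtain ⟨u, hu, hu1⟩ := hT.surj (fun _ => 1) (IsLip.const 1)
  obtain ⟨M, hM⟩ := hu.2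
  refine exists_lipschitzWith_of_comp hX fun f hf => ?_
  have hF : IsLip (fun x => ((f x : ℝ) : 𝕂)) := by
    refine IsLip.of_lipschitz (K := 1) hX (LipschitzWith.of_dist_le_mul fun x y => ?_)
    have := hf.dist_le_mul x y
    rwa [dist_eq_norm, ← RCLike.ofReal_sub, RCLike.norm_ofReal, ← Real.dist_eq]
  obtain ⟨⟨N, hN⟩, -⟩ := hT.maps_lip _ hF
  obtain ⟨B, hB⟩ := hF.2
  refine ⟨(|M| * (N + L * |B|)).toNNReal, LipschitzWith.of_dist_le_mul fun y z => ?_⟩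
  rw [Real.coe_toNNReal _ (by positivity)]
  set τ := T (fun _ => 1) with hτ
  have e1 : τ y * u (h y) = 1 := by
    rw [← (hh y).apply_eq hT hX hu, hu1]
  have e2 := (hh y).apply_eq hT hX hF
  have e3 := (hh z).apply_eq hT hX hF
  have e4 : ((f (h y) : ℝ) : 𝕂) - ((f (h z) : ℝ) : 𝕂) = u (h y) *
      ((T (fun x => ((f x : ℝ) : 𝕂)) y - T (fun x => ((f x : ℝ) : 𝕂)) z)
        - (τ y - τ z) * ((f (h z) : ℝ) : 𝕂)) := by
    rw [e2, e3]
    linear_combination (-(f (h y) : 𝕂) + (f (h z) : 𝕂)) * e1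
  have n1 := hN.dist_le_mul y z
  have n2 := hL.dist_le_mul y z
  rw [dist_eq_norm] at n1 n2
  have n3 := (hM (h y)).trans (le_abs_self M)
  have n4 := (hB (h z)).trans (le_abs_self B)
  rw [Function.comp_apply, Function.comp_apply, Real.dist_eq, ← RCLike.norm_ofReal (K := 𝕂),
    RCLike.ofReal_sub, e4, norm_mul]
  calc _ ≤ |M| * (N * dist y z + L * dist y z * |B|) := by
        gcongr
        refine (norm_sub_le _ _).trans ?_
        rw [norm_mul]
        gcongr
    _ = _ := by ring

end Bisep

/-! ### Norm estimate -/

section Norm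

variable {𝕂 X Y : Type*} [RCLike 𝕂] [MetricSpace X] [MetricSpace Y]

lemma IsLip.norm_le_lipNorm {f : X → 𝕂} (hf : IsLip f) (x : X) : ‖f x‖ ≤ lipNorm f := by
  obtain ⟨-, C, hC⟩ := hf
  exact (le_ciSup (f := fun x => ‖f x‖) ⟨C, by rintro _ ⟨x, rfl⟩; exact hC x⟩ x).trans
    (le_max_left _ _)

lemma IsLip.norm_sub_le_lipNorm {f : X → 𝕂} (hf : IsLip f) (a b : X) :
    ‖f a - f b‖ ≤ lipNorm f * dist a b := by
  obtain ⟨⟨K, hK⟩, -⟩ := hf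
  rcases (dist_nonneg (x := a) (y := b)).eq_or_lt with h | h
  · have : a = b := dist_eq_zero.mp h.symm
    simp [this]
  · rw [← div_le_iff₀ h]
    refine (le_ciSup (f := fun p : X × X => ‖f p.1 - f p.2‖ / dist p.1 p.2) ⟨K, ?_⟩ (a, b)).trans
      (le_max_right _ _)
    rintro _ ⟨p, rfl⟩
    refine div_le_of_le_mul₀ dist_nonneg K.2 ?_
    have := hK.dist_le_mul p.1 p.2
    rwa [dist_eq_norm] at this

lemma lipNorm_nonneg (f : X → 𝕂) : 0 ≤ lipNorm f :=
  le_max_of_le_left (Real.iSup_nonneg fun _ => norm_nonneg _)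

lemma lipNorm_le {f : X → 𝕂} {C : ℝ} (hC : 0 ≤ C) (h1 : ∀ x, ‖f x‖ ≤ C)
    (h2 : ∀ a b, ‖f a - f b‖ ≤ C * dist a b) : lipNorm f ≤ C :=
  max_le (Real.iSup_le h1 hC)
    (Real.iSup_le (fun p => div_le_of_le_mul₀ dist_nonneg hC (h2 p.1 p.2)) hC)

lemma lipNorm_weighted_comp_le {h : Y → X} {K : ℝ≥0} (hh : LipschitzWith K h) {τ : Y → 𝕂}
    (hτ : IsLip τ) {f : X → 𝕂} (hf : IsLip f) {g : Y → 𝕂} (hg : ∀ y, g y = τ y * f (h y)) :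
    lipNorm g ≤ lipNorm τ * (K + 1) * lipNorm f := by
  have t0 := lipNorm_nonneg τ
  have f0 := lipNorm_nonneg f
  refine lipNorm_le (by positivity) (fun y => ?_) (fun a b => ?_)
  · rw [hg, norm_mul]
    have h1 := hτ.norm_le_lipNorm y
    have h2 := hf.norm_le_lipNorm (h y)
    calc _ ≤ lipNorm τ * 1 * lipNorm f := by rw [mul_one]; gcongr
      _ ≤ _ := by gcongr; simp
  · have e : g a - g b = τ a * (f (h a) - f (h b)) + (τ a - τ b) * f (h b) := by
      rw [hg, hg]
      ring
    rw [e]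
    refine (norm_add_le _ _).trans ?_
    rw [norm_mul, norm_mul]
    calc _ ≤ lipNorm τ * (lipNorm f * (K * dist a b)) + lipNorm τ * dist a b * lipNorm f := by
          gcongr
          · exact hτ.norm_le_lipNorm a
          · refine (hf.norm_sub_le_lipNorm _ _).trans ?_
            gcongr
            exact hh.dist_le_mul a b
          · exact hτ.norm_sub_le_lipNorm a b
          · exact hf.norm_le_lipNorm _
      _ = _ := by ring

end Norm

/-- Every linear biseparating map `T : Lip(X) → Lip(Y)` between scalar-valued
bounded Lipschitz function spaces is continuous, and is a weighted composition map
`(T f) y = τ y * f (h y)` for a bi-Lipschitz homeomorphism `h : Y → X` and a nonvanishing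
`τ ∈ Lip(Y)`. -/
theorem biseparating_scalar_representation
    {𝕂 X Y : Type*} [RCLike 𝕂]
    [MetricSpace X] [CompleteSpace X] [MetricSpace Y] [CompleteSpace Y]
    (hXb : IsBounded (univ : Set X)) (hYb : IsBounded (univ : Set Y))
    (T : (X → 𝕂) → (Y → 𝕂)) (hT : IsBisep 𝕂 T) :
    (∃ C : ℝ, 0 ≤ C ∧ ∀ f, IsLip f → lipNorm (T f) ≤ C * lipNorm f) ∧
    ∃ (h : Y → X) (τ : Y → 𝕂),
      Bijective h ∧ (∃ K : ℝ≥0, LipschitzWith K h) ∧ (∃ K : ℝ≥0, AntilipschitzWith K h) ∧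
      IsLip τ ∧ (∀ y, τ y ≠ 0) ∧
      ∀ f, IsLip f → ∀ y, T f y = τ y * f (h y) := by
  obtain ⟨S, hS, hST, hTS⟩ := hT.exists_inverse
  choose h hh using hT.exists_suppAt hXb hYb
  choose h' hh' using hS.exists_suppAt hYb hXb
  have hh'T : ∀ x, SuppAt T x (h' x) := fun x => (hh' x).symm hT hST
  have hhS : ∀ y, SuppAt S y (h y) := fun y => (hh y).symm hS hTS
  have hr : ∀ x, h (h' x) = x := fun x => (hh (h' x)).unique hXb (hh'T x)
  have hl : ∀ y, h' (h y) = y := fun y => (hh' (h y)).unique hYb (hhS y)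
  obtain ⟨K, hK⟩ := hT.lipschitz_of_suppAt hXb hh
  obtain ⟨K', hK'⟩ := hS.lipschitz_of_suppAt hYb hh'
  have hτ : IsLip (T fun _ => 1) := hT.maps_lip _ (IsLip.const 1)
  have hrep : ∀ f, IsLip f → ∀ y, T f y = T (fun _ => 1) y * f (h y) :=
    fun f hf y => (hh y).apply_eq hT hXb hf
  refine ⟨⟨lipNorm (T fun _ => 1) * (K + 1), ?_, fun f hf =>
    lipNorm_weighted_comp_le hK hτ hf (hrep f hf)⟩, h, T fun _ => 1,
    ⟨LeftInverse.injective hl, RightInverse.surjective hr⟩, ⟨K, hK⟩, ⟨K', hK'.to_rightInverse hl⟩,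
    hτ, fun y hy => ?_, hrep⟩
  · have := lipNorm_nonneg (T fun _ => 1)
    positivity
  · obtain ⟨u, hu, hu1⟩ := hT.surj (fun _ => 1) (IsLip.const 1)
    have := hrep u hu y
    rw [hu1, hy, zero_mul] at this
    exact one_ne_zero this
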